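/- Let I be a closed unbounded set of ordinals and let B ⊆ I be countable and closed. Then clauses (b) and (c) of suitability hold for B if and only if every gap of B is capped by a member of B which is a limit point of I of uncountable cofinality; precisely, (b) and (c) hold if and only if for every β ∈ B, if there exists γ ∈ I ∖ B with γ < β and (γ, β) ∩ B = ∅, then β is a limit point of I of uncountable cofinality. -/

import Mathlib

open Set

noncomputable section

/-- `l` is a limit point of the set `S` of ordinals: `l > 0` and `sup (S ∩ l) = l`. -/
def IsLimitPoint (S : Set Ordinal) (l : Ordinal) : Prop :=
  0 < l ∧ sSup (S ∩ Iio l) = l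

/-- A set of ordinals is closed if it contains all of its limit points. -/
def IsClosedSet (S : Set Ordinal) : Prop :=
  ∀ l, IsLimitPoint S l → l ∈ S

/-- A set of ordinals is unbounded (in the class of all ordinals). -/
def IsUnboundedSet (S : Set Ordinal) : Prop :=
  ∀ a, ∃ b ∈ S, a < b

/-- `B` is a suitable subset of `I`: it is a countable closed subset of `I`, every member of `B`
which is a limit point of `I` of countable cofinality is a limit point of `B`, and `B` is closed
under immediate predecessors in `I`. -/
def Suitable (I B : Set Ordinal) : Prop :=
  B ⊆ I ∧ B.Countable ∧ IsClosedSet B ∧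
  (∀ β ∈ B, IsLimitPoint I β → β.cof ≤ Cardinal.aleph0 → IsLimitPoint B β) ∧
  (∀ β ∈ B, ∀ m, IsGreatest (I ∩ Iio β) m → m ∈ B)

theorem lp_iff (S : Set Ordinal) (l : Ordinal) :
    IsLimitPoint S l ↔ 0 < l ∧ ∀ a < l, ∃ s ∈ S, a < s ∧ s < l := by
  have hb : BddAbove (S ∩ Iio l) := ⟨l, fun x hx => le_of_lt hx.2⟩
  constructor
  · rintro ⟨h0, h⟩
    refine ⟨h0, fun a ha => ?_⟩
    by_contra hc
    push Not at hc
    have : sSup (S ∩ Iio l) ≤ a := by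
      apply csSup_le'
      intro x hx
      by_contra hx'
      exact absurd hx.2 (not_lt.mpr (hc x hx.1 (not_le.mp hx')))
    rw [h] at this
    exact absurd ha (not_lt.mpr this)
  · rintro ⟨h0, h⟩
    refine ⟨h0, le_antisymm (csSup_le' fun x hx => le_of_lt hx.2) ?_⟩
    by_contra hc
    obtain ⟨s, hs, h1, h2⟩ := h _ (not_le.mp hc)
    exact absurd (le_csSup hb ⟨hs, h2⟩) (not_le.mpr h1)

/-- For a countable closed `B ⊆ I`, clauses (b) and (c) of suitability hold iff every gap of `B`
is capped by a member of `B` which is a limit point of `I` of uncountable cofinality. -/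
theorem stmt1 (I B : Set Ordinal) (hIcl : IsClosedSet I) (hIunb : IsUnboundedSet I)
    (hBI : B ⊆ I) (hcnt : B.Countable) (hBcl : IsClosedSet B) :
    ((∀ β ∈ B, IsLimitPoint I β → β.cof ≤ Cardinal.aleph0 → IsLimitPoint B β) ∧
     (∀ β ∈ B, ∀ m, IsGreatest (I ∩ Iio β) m → m ∈ B)) ↔
    (∀ β ∈ B, (∃ γ ∈ I \ B, γ < β ∧ Ioo γ β ∩ B = ∅) →
      IsLimitPoint I β ∧ Cardinal.aleph0 < β.cof) := by
  constructor
  · rintro ⟨hb, hc⟩ β hβ ⟨γ, ⟨hγI, hγB⟩, hγβ, hgap⟩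
    have hgap' : ∀ x ∈ B, γ < x → x < β → False := fun x hx h1 h2 => by
      have : x ∈ Ioo γ β ∩ B := ⟨⟨h1, h2⟩, hx⟩
      rw [hgap] at this
      exact this
    have h0 : 0 < β := lt_of_le_of_lt zero_le hγβ
    have hbd : BddAbove (I ∩ Iio β) := ⟨β, fun x hx => le_of_lt hx.2⟩
    have hlim : IsLimitPoint I β := by
      by_contra hn
      have hle : sSup (I ∩ Iio β) ≤ β := csSup_le' fun x hx => le_of_lt hx.2
      have hlt : sSup (I ∩ Iio β) < β := lt_of_le_of_ne hle fun h => hn ⟨h0, h⟩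
      have hγs : γ ≤ sSup (I ∩ Iio β) := le_csSup hbd ⟨hγI, hγβ⟩
      have hsI : sSup (I ∩ Iio β) ∈ I := by
        by_contra hs
        apply hs
        apply hIcl
        rw [lp_iff]
        have hne : γ ≠ sSup (I ∩ Iio β) := fun h => hs (h ▸ hγI)
        refine ⟨lt_of_le_of_lt zero_le (lt_of_le_of_ne hγs hne), fun a ha => ?_⟩
        obtain ⟨x, hx, hax⟩ := exists_lt_of_lt_csSup (s := I ∩ Iio β) ⟨γ, hγI, hγβ⟩ ha
        exact ⟨x, hx.1, hax, lt_of_le_of_ne (le_csSup hbd hx) fun h => hs (h ▸ hx.1)⟩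
      have hsB := hc β hβ _ ⟨⟨hsI, hlt⟩, fun x hx => le_csSup hbd hx⟩
      exact hgap' _ hsB (lt_of_le_of_ne hγs fun h => hγB (h ▸ hsB)) hlt
    refine ⟨hlim, ?_⟩
    by_contra hcof
    obtain ⟨x, hx, h1, h2⟩ := ((lp_iff _ _).1 (hb β hβ hlim (not_lt.mp hcof))).2 γ hγβ
    exact hgap' x hx h1 h2
  · intro h
    constructor
    · intro β hβ hlim hcof
      rw [lp_iff]
      refine ⟨hlim.1, fun a ha => ?_⟩
      by_contra hn
      obtain ⟨γ, hγ, h1, h2⟩ := ((lp_iff _ _).1 hlim).2 a ha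
      have := h β hβ ⟨γ, ⟨hγ, fun hB => hn ⟨γ, hB, h1, h2⟩⟩, h2,
        eq_empty_of_forall_notMem fun x hx => hn ⟨x, hx.2, h1.trans hx.1.1, hx.1.2⟩⟩
      exact absurd this.2 (not_lt.mpr hcof)
    · intro β hβ m hm
      by_contra hmB
      have := h β hβ ⟨m, ⟨hm.1.1, hmB⟩, hm.1.2, eq_empty_of_forall_notMem fun x hx =>
        absurd (hm.2 ⟨hBI hx.2, hx.1.2⟩) (not_le.mpr hx.1.1)⟩
      obtain ⟨x, hx, h1, h2⟩ := ((lp_iff _ _).1 this.1).2 m hm.1.2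
      exact absurd (hm.2 ⟨hx, h2⟩) (not_le.mpr h1)
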